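/- Let C ⊆ ℝⁿ be a body of revolution that is not a vertical segment. Then the function R_C is monotonically nondecreasing on (−1,0], monotonically nonincreasing on [0,1), and there exists δ > 0 such that R_C(t) > 0 for all t ∈ (−δ,δ). -/

import Mathlib

open Set Filter Topology Function
open scoped RealInnerProductSpace Pointwise

/-- Euclidean space `ℝ^(n+1)`. -/
abbrev Euc (n : ℕ) := EuclideanSpace ℝ (Fin (n + 1))

/-- The last standard basis vector `e_n`. -/
noncomputable def eAx (n : ℕ) : Euc n := EuclideanSpace.single (Fin.last n) (1 : ℝ)

/-- Support function of a set `K`. -/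
noncomputable def suppFn {n : ℕ} (K : Set (Euc n)) (u : Euc n) : ℝ :=
  sSup ((fun x => ⟪x, u⟫) '' K)

/-- The face of `K` in direction `u`. -/
def face {n : ℕ} (K : Set (Euc n)) (u : Euc n) : Set (Euc n) :=
  {x ∈ K | ⟪x, u⟫ = suppFn K u}

/-- `C` is a body of revolution with axis `e_n`: it is invariant under every linear
isometry fixing `e_n`. -/
def IsRevBody {n : ℕ} (C : Set (Euc n)) : Prop :=
  C.Nonempty ∧ IsCompact C ∧ Convex ℝ C ∧
    ∀ ρ : Euc n ≃ₗᵢ[ℝ] Euc n, ρ (eAx n) = eAx n → ρ '' C = C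

/-- The restricted support function `h̄_C(t) = h_C(t·e_n + √(1-t²)·ū)`. -/
noncomputable def hbar {n : ℕ} (C : Set (Euc n)) (ub : Euc n) (t : ℝ) : ℝ :=
  suppFn C (t • eAx n + Real.sqrt (1 - t ^ 2) • ub)

/-- The right derivative `∂₊h̄_C(t)` (as a limit along `𝓝[>] t`; it exists for bodies of
revolution). -/
noncomputable def rightDeriv (h : ℝ → ℝ) (t : ℝ) : ℝ :=
  limUnder (𝓝[>] t) fun s => (h s - h t) / (s - t)

/-- The profile function `R_C(t) = √(1-t²)·(h̄_C(t) - t·∂₊h̄_C(t))`. -/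
noncomputable def RC {n : ℕ} (C : Set (Euc n)) (ub : Euc n) (t : ℝ) : ℝ :=
  Real.sqrt (1 - t ^ 2) * (hbar C ub t - t * rightDeriv (hbar C ub) t)

/-!
On `(-1, 1)` the slope `m = t / √(1 - t²)` is an increasing function of `t`, and homogeneity of the
support function gives `h̄_C(t) = √(1 - t²) · g(m)` with `g(m) = h_C(m e_n + ū)` convex.
Differentiating this product, `R_C(t) = g(m) - m g'₊(m)`: the height at which the right tangent line
of `g` at `m` meets the vertical axis. Since a convex function lies above its tangent lines, that
height does not increase as `m` moves away from `0`. At `m = 0` it is `h_C(ū)`, which by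
rotational symmetry is positive as soon as `C` has a point off the axis.
-/

section ConvexFunction

variable {S : Set ℝ} {g : ℝ → ℝ}

/-- The height at which the right tangent line of `g` at `m` meets the vertical axis. A junk value
where `g` has no right derivative; convex functions have one on the interior of their domain. -/
noncomputable def rightTangentIntercept (g : ℝ → ℝ) (m : ℝ) : ℝ :=
  g m - m * derivWithin g (Ioi m) m

lemma add_rightDeriv_mul_sub_le_of_convexOn (hg : ConvexOn ℝ S g) {x y : ℝ} (hx : x ∈ interior S)
    (hy : y ∈ S) : g x + derivWithin g (Ioi x) x * (y - x) ≤ g y := by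
  rcases lt_trichotomy x y with hxy | rfl | hyx
  · have h := hg.rightDeriv_le_slope_of_mem_interior hx hy hxy
    rw [slope_def_field, le_div_iff₀ (sub_pos.2 hxy)] at h
    linarith
  · simp
  · have h := (hg.slope_le_leftDeriv_of_mem_interior hy hx hyx).trans
      (hg.leftDeriv_le_rightDeriv_of_mem_interior hx)
    rw [slope_def_field, div_le_iff₀ (sub_pos.2 hyx)] at h
    linarith

lemma monotoneOn_rightTangentIntercept (hg : ConvexOn ℝ S g) :
    MonotoneOn (rightTangentIntercept g) (interior S ∩ Iic 0) := by
  rintro x ⟨hx, _⟩ y ⟨hy, hy0⟩ hxy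
  have htangent := add_rightDeriv_mul_sub_le_of_convexOn hg hx (interior_subset hy)
  have hderiv := mul_le_mul_of_nonpos_left (hg.monotoneOn_rightDeriv hx hy hxy) hy0
  simp only [rightTangentIntercept]
  linarith

lemma antitoneOn_rightTangentIntercept (hg : ConvexOn ℝ S g) :
    AntitoneOn (rightTangentIntercept g) (interior S ∩ Ici 0) := by
  rintro x ⟨hx, hx0⟩ y ⟨hy, _⟩ hxy
  have htangent := add_rightDeriv_mul_sub_le_of_convexOn hg hy (interior_subset hx)
  have hderiv := mul_le_mul_of_nonneg_left (hg.monotoneOn_rightDeriv hx hy hxy) hx0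
  simp only [rightTangentIntercept]
  linarith

lemma eventually_rightTangentIntercept_pos (hg : ConvexOn ℝ S g) (h0 : 0 ∈ interior S)
    (hpos : 0 < g 0) : ∀ᶠ m in 𝓝 0, 0 < rightTangentIntercept g m := by
  have hcont : ContinuousAt g 0 :=
    hg.continuousOn_interior.continuousAt (isOpen_interior.mem_nhds h0)
  have hdouble : Tendsto (fun m : ℝ => 2 * m) (𝓝 0) (𝓝 0) := by
    simpa using (continuous_const_mul (2 : ℝ)).tendsto 0
  have hlim : Tendsto (fun m => 2 * g m - g (2 * m)) (𝓝 0) (𝓝 (2 * g 0 - g 0)) :=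
    (hcont.tendsto.const_mul 2).sub (hcont.tendsto.comp hdouble)
  have hmem := isOpen_interior.mem_nhds h0
  -- The tangent inequality at `m`, evaluated at `2m`, bounds the intercept by `2g(m) - g(2m)`.
  filter_upwards [hmem, hdouble hmem, hlim.eventually_const_lt (u := 0) (by linarith)]
    with m hm h2m hlt
  have htangent := add_rightDeriv_mul_sub_le_of_convexOn hg hm (interior_subset h2m)
  simp only [rightTangentIntercept]
  linarith

end ConvexFunction

section Slope

variable {t : ℝ}

lemma sqrt_one_sub_sq_pos (ht : t ∈ Ioo (-1 : ℝ) 1) : 0 < √(1 - t ^ 2) :=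
  Real.sqrt_pos.2 (by nlinarith [ht.1, ht.2])

lemma strictMonoOn_div_sqrt_one_sub_sq :
    StrictMonoOn (fun t : ℝ => t / √(1 - t ^ 2)) (Ioo (-1) 1) := by
  intro a ha b hb hab
  simp only [← Real.tan_arcsin]
  exact Real.tan_lt_tan_of_lt_of_lt_pi_div_two (Real.neg_pi_div_two_lt_arcsin.2 ha.1)
    (Real.arcsin_lt_pi_div_two.2 hb.2)
    (Real.strictMonoOn_arcsin (Ioo_subset_Icc_self ha) (Ioo_subset_Icc_self hb) hab)

lemma hasDerivAt_sqrt_one_sub_sq (ht : t ∈ Ioo (-1 : ℝ) 1) :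
    HasDerivAt (fun t : ℝ => √(1 - t ^ 2)) (-t / √(1 - t ^ 2)) t := by
  simp only [← Real.cos_arcsin]
  refine (Real.hasDerivAt_arcsin ht.1.ne' ht.2.ne).cos.congr_deriv ?_
  rw [Real.sin_arcsin ht.1.le ht.2.le, Real.cos_arcsin, mul_one_div]

lemma hasDerivAt_div_sqrt_one_sub_sq (ht : t ∈ Ioo (-1 : ℝ) 1) :
    HasDerivAt (fun t : ℝ => t / √(1 - t ^ 2)) (1 / √(1 - t ^ 2) ^ 3) t := by
  have hs := sqrt_one_sub_sq_pos ht
  have hcos : Real.cos (Real.arcsin t) ≠ 0 := by rw [Real.cos_arcsin]; exact hs.ne'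
  simp only [← Real.tan_arcsin]
  refine ((Real.hasDerivAt_tan hcos).comp t
    (Real.hasDerivAt_arcsin ht.1.ne' ht.2.ne)).congr_deriv ?_
  rw [Real.cos_arcsin]
  field_simp

lemma hasDerivWithinAt_homogenization {g : ℝ → ℝ} {g' : ℝ} (ht : t ∈ Ioo (-1 : ℝ) 1)
    (hg : HasDerivWithinAt g g' (Ioi (t / √(1 - t ^ 2))) (t / √(1 - t ^ 2))) :
    HasDerivWithinAt (fun t => √(1 - t ^ 2) * g (t / √(1 - t ^ 2)))
      (g' / √(1 - t ^ 2) ^ 2 - t * g (t / √(1 - t ^ 2)) / √(1 - t ^ 2)) (Ioi t) t := by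
  have hs := sqrt_one_sub_sq_pos ht
  have hmaps : MapsTo (fun t : ℝ => t / √(1 - t ^ 2)) (Ioo t 1) (Ioi (t / √(1 - t ^ 2))) :=
    fun _ hu => strictMonoOn_div_sqrt_one_sub_sq ht ⟨ht.1.trans hu.1, hu.2⟩ hu.1
  have hcomp := hg.comp t (hasDerivAt_div_sqrt_one_sub_sq ht).hasDerivWithinAt hmaps
  have hmul := (hasDerivAt_sqrt_one_sub_sq ht).hasDerivWithinAt.mul hcomp
  refine (hmul.mono_of_mem_nhdsWithin (Ioo_mem_nhdsGT ht.2)).congr_deriv ?_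
  simp only [comp_apply]
  field_simp
  ring

end Slope

lemma rightDeriv_eq_of_hasDerivWithinAt {h : ℝ → ℝ} {h' t : ℝ}
    (hh : HasDerivWithinAt h h' (Ioi t) t) : rightDeriv h t = h' := by
  rw [hasDerivWithinAt_iff_tendsto_slope' self_notMem_Ioi] at hh
  refine Tendsto.limUnder_eq (hh.congr fun s => ?_)
  rw [slope_def_field]

section SupportFunction

variable {n : ℕ} {K : Set (Euc n)}

lemma inner_le_suppFn (hK : Bornology.IsBounded K) {x : Euc n} (hx : x ∈ K) (u : Euc n) :
    ⟪x, u⟫ ≤ suppFn K u := by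
  have hbdd : BddAbove ((fun x => ⟪x, u⟫) '' K) := by
    simpa [real_inner_comm] using ((innerSL ℝ u).lipschitz.isBounded_image hK).bddAbove
  exact le_csSup hbdd (mem_image_of_mem _ hx)

lemma suppFn_le (hne : K.Nonempty) {u : Euc n} {c : ℝ} (h : ∀ x ∈ K, ⟪x, u⟫ ≤ c) :
    suppFn K u ≤ c :=
  csSup_le (hne.image _) (forall_mem_image.2 h)

lemma suppFn_smul (K : Set (Euc n)) {c : ℝ} (hc : 0 ≤ c) (u : Euc n) :
    suppFn K (c • u) = c * suppFn K u := by
  have h : (fun x => ⟪x, c • u⟫) '' K = c • ((fun x => ⟪x, u⟫) '' K) := by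
    simp only [← image_smul, image_image, real_inner_smul_right, smul_eq_mul]
  rw [suppFn, h, Real.sSup_smul_of_nonneg hc, smul_eq_mul, suppFn]

lemma suppFn_image_linearIsometry {m : ℕ} (K : Set (Euc n)) (ρ : Euc n →ₗᵢ[ℝ] Euc m)
    (u : Euc n) :
    suppFn (ρ '' K) (ρ u) = suppFn K u := by
  simp only [suppFn, image_image, ρ.inner_map_map]

lemma convexOn_suppFn (hK : Bornology.IsBounded K) (hne : K.Nonempty) :
    ConvexOn ℝ univ (suppFn K) := by
  refine ⟨convex_univ, fun u _ v _ a b ha hb _ => suppFn_le hne fun x hx => ?_⟩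
  rw [inner_add_right, real_inner_smul_right, real_inner_smul_right, smul_eq_mul, smul_eq_mul]
  gcongr <;> exact inner_le_suppFn hK hx _

lemma convexOn_suppFn_line (hK : Bornology.IsBounded K) (hne : K.Nonempty) (e u : Euc n) :
    ConvexOn ℝ univ fun m : ℝ => suppFn K (m • e + u) := by
  simpa [comp_def, AffineMap.lineMap_apply_module'] using
    (convexOn_suppFn hK hne).comp_affineMap (AffineMap.lineMap u (e + u))

end SupportFunction

section Profile

variable {n : ℕ} {C : Set (Euc n)}

lemma hbar_eq_sqrt_mul_suppFn (C : Set (Euc n)) (ub : Euc n) {t : ℝ} (ht : t ∈ Ioo (-1 : ℝ) 1) :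
    hbar C ub t = √(1 - t ^ 2) * suppFn C ((t / √(1 - t ^ 2)) • eAx n + ub) := by
  have hs := sqrt_one_sub_sq_pos ht
  rw [← suppFn_smul C hs.le, smul_add, smul_smul, mul_div_cancel₀ _ hs.ne', hbar]

lemma hasDerivWithinAt_hbar {ub : Euc n} {t g' : ℝ} (ht : t ∈ Ioo (-1 : ℝ) 1)
    (hg : HasDerivWithinAt (fun m : ℝ => suppFn C (m • eAx n + ub)) g'
      (Ioi (t / √(1 - t ^ 2))) (t / √(1 - t ^ 2))) :
    HasDerivWithinAt (hbar C ub)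
      (g' / √(1 - t ^ 2) ^ 2 -
        t * suppFn C ((t / √(1 - t ^ 2)) • eAx n + ub) / √(1 - t ^ 2)) (Ioi t) t := by
  refine (hasDerivWithinAt_homogenization ht hg).congr_of_eventuallyEq ?_
    (hbar_eq_sqrt_mul_suppFn C ub ht)
  filter_upwards [Ioo_mem_nhdsGT ht.2] with s hs
  exact hbar_eq_sqrt_mul_suppFn C ub ⟨ht.1.trans hs.1, hs.2⟩

lemma RC_eqOn_rightTangentIntercept (hC : Bornology.IsBounded C) (hne : C.Nonempty)
    (ub : Euc n) :
    EqOn (RC C ub)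
      (rightTangentIntercept (fun m => suppFn C (m • eAx n + ub)) ∘ fun t => t / √(1 - t ^ 2))
      (Ioo (-1) 1) := by
  intro t ht
  have hs := sqrt_one_sub_sq_pos ht
  have hsq : √(1 - t ^ 2) ^ 2 = 1 - t ^ 2 := Real.sq_sqrt (Real.sqrt_pos.1 hs).le
  have hg := (convexOn_suppFn_line hC hne (eAx n) ub).hasDerivWithinAt_rightDeriv_of_mem_interior
    (x := t / √(1 - t ^ 2)) (by simp)
  rw [RC, rightDeriv_eq_of_hasDerivWithinAt (hasDerivWithinAt_hbar ht hg),
    hbar_eq_sqrt_mul_suppFn C ub ht, comp_apply, rightTangentIntercept]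
  field_simp
  rw [pow_succ, hsq]
  ring

lemma monotoneOn_RC (hC : Bornology.IsBounded C) (hne : C.Nonempty) (ub : Euc n) :
    MonotoneOn (RC C ub) (Ioc (-1) 0) := by
  have hsub : Ioc (-1 : ℝ) 0 ⊆ Ioo (-1) 1 := Ioc_subset_Ioo_right one_pos
  refine MonotoneOn.congr ?_ ((RC_eqOn_rightTangentIntercept hC hne ub).mono hsub).symm
  refine (monotoneOn_rightTangentIntercept (convexOn_suppFn_line hC hne (eAx n) ub)).comp
    (strictMonoOn_div_sqrt_one_sub_sq.monotoneOn.mono hsub) fun t ht => ?_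
  exact ⟨by simp, div_nonpos_of_nonpos_of_nonneg ht.2 (Real.sqrt_nonneg _)⟩

lemma antitoneOn_RC (hC : Bornology.IsBounded C) (hne : C.Nonempty) (ub : Euc n) :
    AntitoneOn (RC C ub) (Ico 0 1) := by
  have hsub : Ico (0 : ℝ) 1 ⊆ Ioo (-1) 1 := Ico_subset_Ioo_left neg_one_lt_zero
  refine AntitoneOn.congr ?_ ((RC_eqOn_rightTangentIntercept hC hne ub).mono hsub).symm
  refine (antitoneOn_rightTangentIntercept
    (convexOn_suppFn_line hC hne (eAx n) ub)).comp_MonotoneOn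
    (strictMonoOn_div_sqrt_one_sub_sq.monotoneOn.mono hsub) fun t ht => ?_
  exact ⟨by simp, div_nonneg ht.1 (Real.sqrt_nonneg _)⟩

lemma eventually_RC_pos (hC : Bornology.IsBounded C) (hne : C.Nonempty) {ub : Euc n}
    (hpos : 0 < suppFn C ub) : ∀ᶠ t in 𝓝 0, 0 < RC C ub t := by
  have hintercept := eventually_rightTangentIntercept_pos
    (convexOn_suppFn_line hC hne (eAx n) ub) (by simp) (by simpa using hpos)
  have hslope : Tendsto (fun t : ℝ => t / √(1 - t ^ 2)) (𝓝 0) (𝓝 0) := by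
    simpa [ContinuousAt] using
      (hasDerivAt_div_sqrt_one_sub_sq (t := 0) (by norm_num)).continuousAt
  filter_upwards [hslope.eventually hintercept,
    Ioo_mem_nhds (neg_one_lt_zero (R := ℝ)) one_pos] with t hlt ht
  rwa [RC_eqOn_rightTangentIntercept hC hne ub ht]

end Profile

lemma exists_eq_image_Icc_of_subset_span {E : Type*} [AddCommGroup E] [Module ℝ E]
    [TopologicalSpace E] [IsTopologicalAddGroup E] [ContinuousSMul ℝ E] [T2Space E] {C : Set E}
    (hC : IsCompact C) (hconv : Convex ℝ C) (hne : C.Nonempty) {e : E} (he : e ≠ 0)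
    (hsub : C ⊆ ℝ ∙ e) :
    ∃ (x : E) (l : ℝ), 0 ≤ l ∧ C = (fun s : ℝ => x + s • e) '' Icc 0 l := by
  let φ : ℝ →ₗ[ℝ] E := LinearMap.toSpanSingleton ℝ E e
  have hrange : C ⊆ range φ := fun x hx => Submodule.mem_span_singleton.1 (hsub hx)
  have hcompact : IsCompact (φ ⁻¹' C) := (isClosedEmbedding_smul_left he).isCompact_preimage hC
  have hconn : IsConnected (φ ⁻¹' C) :=
    (hconv.linear_preimage φ).isConnected (hne.preimage' hrange)
  obtain ⟨a, b, hab⟩ : ∃ a b : ℝ, φ ⁻¹' C = Icc a b :=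
    ⟨_, _, eq_Icc_of_connected_compact hconn hcompact⟩
  refine ⟨a • e, b - a, sub_nonneg.2 (nonempty_Icc.1 (hab ▸ hconn.nonempty)), ?_⟩
  calc C = φ '' Icc (a + 0) (a + (b - a)) := by
        rw [add_zero, add_sub_cancel, ← hab, image_preimage_eq_of_subset hrange]
    _ = (fun s : ℝ => a • e + s • e) '' Icc 0 (b - a) := by
        rw [← image_const_add_Icc, image_image]
        simp only [φ, LinearMap.toSpanSingleton_apply, add_smul]

section Revolution

variable {n : ℕ} {C : Set (Euc n)}

lemma eAx_ne_zero (n : ℕ) : eAx n ≠ 0 := by simp [eAx]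

lemma IsRevBody.suppFn_congr (hC : IsRevBody C) {u v : Euc n} (hnorm : ‖u‖ = ‖v‖)
    (hinner : ⟪eAx n, u⟫ = ⟪eAx n, v⟫) : suppFn C u = suppFn C v := by
  let ρ : Euc n ≃ₗᵢ[ℝ] Euc n := (ℝ ∙ (u - v))ᗮ.reflection
  have horth : ⟪eAx n, u - v⟫ = 0 := by rw [inner_sub_right, hinner, sub_self]
  have hρe : ρ (eAx n) = eAx n := Submodule.reflection_mem_subspace_eq_self
    (Submodule.mem_orthogonal_singleton_iff_inner_left.2 horth)
  have hρu : ρ u = v := Submodule.reflection_sub hnorm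
  calc suppFn C u = suppFn (ρ '' C) (ρ u) :=
        (suppFn_image_linearIsometry C ρ.toLinearIsometry u).symm
    _ = suppFn C v := by rw [hC.2.2.2 ρ hρe, hρu]

lemma IsRevBody.suppFn_pos_of_not_subset_axis (hC : IsRevBody C) (haxis : ¬ C ⊆ ℝ ∙ eAx n)
    {ub : Euc n} (hub : ‖ub‖ = 1) (horth : ⟪eAx n, ub⟫ = 0) : 0 < suppFn C ub := by
  obtain ⟨x, hx, hxaxis⟩ := not_subset.1 haxis
  set w := (ℝ ∙ eAx n)ᗮ.starProjection x with hw
  have hwpos : 0 < ‖w‖ := by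
    rw [norm_pos_iff, hw, Ne, Submodule.starProjection_apply_eq_zero_iff,
      Submodule.orthogonal_orthogonal]
    exact hxaxis
  have hwe : ⟪eAx n, w⟫ = 0 := Submodule.mem_orthogonal_singleton_iff_inner_right.1
    (Submodule.starProjection_apply_mem _ x)
  have hxw : ⟪x, w⟫ = ‖w‖ ^ 2 := by
    rw [real_inner_comm]
    exact Submodule.re_inner_starProjection_eq_normSq (𝕜 := ℝ) _ x
  have hscale : suppFn C w = ‖w‖ * suppFn C ub := by
    rw [← suppFn_smul C hwpos.le]
    exact hC.suppFn_congr (by simp [norm_smul, hub])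
      (by rw [hwe, real_inner_smul_right, horth, mul_zero])
  have hle : ‖w‖ ^ 2 ≤ ‖w‖ * suppFn C ub :=
    hxw ▸ hscale ▸ inner_le_suppFn hC.2.1.isBounded hx w
  exact pos_of_mul_pos_right ((pow_pos hwpos 2).trans_le hle) hwpos.le

end Revolution

/-- For a body of revolution `C` that is not a vertical segment, `R_C`
is nondecreasing on `(-1,0]`, nonincreasing on `[0,1)`, and strictly positive on a
neighborhood `(-δ,δ)` of `0`. -/
theorem revBody_profile_monotone {n : ℕ} (hn : 1 ≤ n) (C : Set (Euc n)) (hC : IsRevBody C)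
    (hseg : ¬ ∃ (x : Euc n) (l : ℝ), 0 ≤ l ∧ C = (fun s => x + s • eAx n) '' Set.Icc 0 l)
    (ub : Euc n) (hub : ‖ub‖ = 1) (horth : ⟪eAx n, ub⟫ = 0) :
    MonotoneOn (RC C ub) (Set.Ioc (-1 : ℝ) 0) ∧
    AntitoneOn (RC C ub) (Set.Ico (0 : ℝ) 1) ∧
    ∃ δ > (0 : ℝ), ∀ t ∈ Set.Ioo (-δ) δ, 0 < RC C ub t := by
  have ⟨hne, hcompact, hconv, _⟩ := hC
  have hbdd := hcompact.isBounded
  have haxis : ¬ C ⊆ ℝ ∙ eAx n := fun hsub =>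
    hseg (exists_eq_image_Icc_of_subset_span hcompact hconv hne (eAx_ne_zero n) hsub)
  have hpos : 0 < suppFn C ub := hC.suppFn_pos_of_not_subset_axis haxis hub horth
  obtain ⟨δ, hδ, hδpos⟩ :=
    (nhds_basis_Ioo_pos (0 : ℝ)).eventually_iff.1 (eventually_RC_pos hbdd hne hpos)
  exact ⟨monotoneOn_RC hbdd hne ub, antitoneOn_RC hbdd hne ub, δ, hδ, by simpa using hδpos⟩
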